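/- For all signs s₁, s₂, s₃ ∈ {+1, −1} and both * = l and * = r, the model triple-point integrals satisfy I_X^{(X′₂,*), s₁, s₂, s₃} = I_X^{(X′₂,*), s₁, −s₂, −s₃} = I_X^{(X′₂,*), −s₁, −s₂, −s₃}. -/

import Mathlib

open MeasureTheory Filter Topology Set

noncomputable section

abbrev E2 : Type := EuclideanSpace ℝ (Fin 2)
abbrev E3 : Type := EuclideanSpace ℝ (Fin 3)
abbrev E4 : Type := EuclideanSpace ℝ (Fin 4)
abbrev E6 : Type := EuclideanSpace ℝ (Fin 6)

/-- The point of `ℝ³` with the given coordinates. -/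
def mk3 (x y z : ℝ) : E3 := (WithLp.equiv 2 (Fin 3 → ℝ)).symm ![x, y, z]

/-- The north pole `N = (0,0,1)` of `S² ⊆ ℝ³`. -/
def NP : E3 := mk3 0 0 1

/-- Projection of `ℝ³` onto the plane `N^⊥` (the first two coordinates). -/
def pr12 (v : E3) : ℝ × ℝ := (v 0, v 1)

/-- The `N`-coordinate. -/
def pr3 (v : E3) : ℝ := v 2

/-- `unitv v = v / ‖v‖`. -/
def unitv (v : E3) : E3 := ‖v‖⁻¹ • v

/-- Determinant of the projections to `N^⊥` of two vectors (first vector, then second). -/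
def cross2 (a b : E3) : ℝ := a 0 * b 1 - a 1 * b 0

/-- 3×3 determinant (scalar triple product); for `p ∈ S²` and `v, w` tangent to `S²` at
`p`, this is the value of the standard area form of `S²` at `p` on `(v, w)`. -/
def det3 (p v w : E3) : ℝ :=
  p 0 * (v 1 * w 2 - v 2 * w 1) - p 1 * (v 0 * w 2 - v 2 * w 0) +
    p 2 * (v 0 * w 1 - v 1 * w 0)

/-! ### Long knots and 3-component long links -/

/-- A long knot: a smooth embedding `ℝ ↪ ℝ³` which is standard outside `[-1,1]`. -/
def IsLongKnot (f : ℝ → E3) : Prop :=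
  ContDiff ℝ (⊤ : ℕ∞) f ∧ Function.Injective f ∧ (∀ t, deriv f t ≠ 0) ∧
    ∀ x : ℝ, 1 ≤ |x| → f x = mk3 x 0 0

/-- Smooth isotopy of long knots. -/
def KnotIsotopic (f₀ f₁ : ℝ → E3) : Prop :=
  ∃ H : ℝ → ℝ → E3,
    ContDiff ℝ (⊤ : ℕ∞) (fun p : ℝ × ℝ => H p.1 p.2) ∧
    (∀ s, IsLongKnot (H s)) ∧ H 0 = f₀ ∧ H 1 = f₁

/-- A 3-component long link: a smooth embedding `ℝ ⊔ ℝ ⊔ ℝ ↪ ℝ³`, standard outside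
`[-1,1]`, component `k` (for `k = 1,2,3`, i.e. index `i = k - 1 : Fin 3`) having ends
`x ↦ (x, (2 - k)|x|, 0)`. -/
def IsLongLink3 (f : Fin 3 → ℝ → E3) : Prop :=
  (∀ i, ContDiff ℝ (⊤ : ℕ∞) (f i)) ∧
  (∀ i j s t, f i s = f j t → i = j ∧ s = t) ∧
  (∀ i t, deriv (f i) t ≠ 0) ∧
  ∀ i (x : ℝ), 1 ≤ |x| → f i x = mk3 x ((1 - ((i : ℕ) : ℝ)) * |x|) 0

/-- Smooth isotopy of 3-component long links. -/
def LinkIsotopic (f₀ f₁ : Fin 3 → ℝ → E3) : Prop :=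
  ∃ H : ℝ → Fin 3 → ℝ → E3,
    (∀ i, ContDiff ℝ (⊤ : ℕ∞) (fun p : ℝ × ℝ => H p.1 i p.2)) ∧
    (∀ s, IsLongLink3 (H s)) ∧ H 0 = f₀ ∧ H 1 = f₁

/-! ### Diagrams, crossings and Gauss diagram pairings -/

/-- All self-intersections of the projection of the long knot `f` are transverse
(any two branches meeting at a multiple point have independent projected tangents). -/
def TransverseK (f : ℝ → E3) : Prop :=
  ∀ t u, t ≠ u → pr12 (f t) = pr12 (f u) → cross2 (deriv f t) (deriv f u) ≠ 0

/-- The diagram of `f` has only transverse double points. -/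
def OnlyDoubleK (f : ℝ → E3) : Prop :=
  TransverseK f ∧
  ∀ t u v : ℝ, t ≠ u → u ≠ v → t ≠ v →
    pr12 (f t) = pr12 (f u) → pr12 (f u) = pr12 (f v) → False

/-- All self-intersections of the projection of the long link `f` are transverse. -/
def TransverseL (f : Fin 3 → ℝ → E3) : Prop :=
  ∀ i j s t, (i, s) ≠ (j, t) → pr12 (f i s) = pr12 (f j t) →
    cross2 (deriv (f i) s) (deriv (f j) t) ≠ 0

/-- The diagram of the long link `f` has only transverse double points. -/
def OnlyDoubleL (f : Fin 3 → ℝ → E3) : Prop :=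
  TransverseL f ∧
  ∀ i j k s t u, (i, s) ≠ (j, t) → (j, t) ≠ (k, u) → (i, s) ≠ (k, u) →
    pr12 (f i s) = pr12 (f j t) → pr12 (f j t) = pr12 (f k u) → False

/-- Crossings of a long knot diagram: pairs `(t, u)` with `t` on the lower and `u` on the
upper strand; the corresponding chord of the Gauss diagram is directed from `t` to `u`. -/
def CrossingK (f : ℝ → E3) : Set (ℝ × ℝ) :=
  {p | p.1 ≠ p.2 ∧ pr12 (f p.1) = pr12 (f p.2) ∧ pr3 (f p.1) < pr3 (f p.2)}

/-- The sign of the crossing `p = (t, u)` (`+1` iff the projected tangent of the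
over-strand followed by that of the under-strand is a positive basis of `N^⊥`). -/
def csignK (f : ℝ → E3) (p : ℝ × ℝ) : ℝ :=
  Real.sign (cross2 (deriv f p.2) (deriv f p.1))

/-- Gauss diagram pairing for a long knot: the sum, over all pairs of chords of the Gauss
diagram of `f` in the relative position prescribed by `R`, of the products of signs. -/
def pairK (f : ℝ → E3) (R : ℝ × ℝ → ℝ × ℝ → Prop) : ℝ :=
  ∑ᶠ q ∈ {q : (ℝ × ℝ) × (ℝ × ℝ) | q.1 ∈ CrossingK f ∧ q.2 ∈ CrossingK f ∧ R q.1 q.2},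
    csignK f q.1 * csignK f q.2

/-- `⟨X, G_D⟩` : chords `x₁ → x₃` and `x₄ → x₂` with `x₁ < x₂ < x₃ < x₄`. -/
def pairXK (f : ℝ → E3) : ℝ :=
  pairK f fun p q => p.1 < q.2 ∧ q.2 < p.2 ∧ p.2 < q.1

/-- `⟨X′₁, G_D⟩` : chords `a → b` and `c → a` with `a < b < c`. -/
def pairX1K (f : ℝ → E3) : ℝ :=
  pairK f fun p q => q.2 = p.1 ∧ p.1 < p.2 ∧ p.2 < q.1

/-- `⟨X′₂, G_D⟩` : chords `a → b` and `c → b` with `a < b < c`. -/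
def pairX2K (f : ℝ → E3) : ℝ :=
  pairK f fun p q => q.2 = p.2 ∧ p.1 < p.2 ∧ p.2 < q.1

/-- `⟨X′₃, G_D⟩` : chords `a → c` and `c → b` with `a < b < c`. -/
def pairX3K (f : ℝ → E3) : ℝ :=
  pairK f fun p q => p.2 = q.1 ∧ p.1 < q.2 ∧ q.2 < p.2

/-- Crossings of a 3-strand diagram between strand `i` (under) and strand `j` (over);
the corresponding chord is directed from `p.1` on strand `i` to `p.2` on strand `j`. -/
def CrossingL (f : Fin 3 → ℝ → E3) (i j : Fin 3) : Set (ℝ × ℝ) :=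
  {p | pr12 (f i p.1) = pr12 (f j p.2) ∧ pr3 (f i p.1) < pr3 (f j p.2)}

/-- The sign of the crossing `p` between strand `i` (under) and strand `j` (over). -/
def csignL (f : Fin 3 → ℝ → E3) (i j : Fin 3) (p : ℝ × ℝ) : ℝ :=
  Real.sign (cross2 (deriv (f j) p.2) (deriv (f i) p.1))

/-- Gauss diagram pairing for a 3-component long link. -/
def pairL (f : Fin 3 → ℝ → E3) (i₁ j₁ i₂ j₂ : Fin 3) (R : ℝ × ℝ → ℝ × ℝ → Prop) : ℝ :=
  ∑ᶠ q ∈ {q : (ℝ × ℝ) × (ℝ × ℝ) |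
      q.1 ∈ CrossingL f i₁ j₁ ∧ q.2 ∈ CrossingL f i₂ j₂ ∧ R q.1 q.2},
    csignL f i₁ j₁ q.1 * csignL f i₂ j₂ q.2

/-- `⟨𝒳₁, G_D⟩` : a chord from `t` on strand 1 to strand 2, and a chord from strand 3 to
`t′` on strand 1, with `t < t′`. -/
def pairL1 (f : Fin 3 → ℝ → E3) : ℝ := pairL f 0 1 2 0 fun p q => p.1 < q.2

/-- `⟨𝒳₂, G_D⟩` : a chord from strand 1 to `u` on strand 2, and a chord from strand 3 to
`u′` on strand 2, with `u < u′`. -/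
def pairL2 (f : Fin 3 → ℝ → E3) : ℝ := pairL f 0 1 2 1 fun p q => p.2 < q.2

/-- `⟨𝒳₃, G_D⟩` : a chord from strand 1 to `v` on strand 3, and a chord from `v′` on
strand 3 to strand 2, with `v < v′`. -/
def pairL3 (f : Fin 3 → ℝ → E3) : ℝ := pairL f 0 2 2 1 fun p q => p.2 < q.1

/-- `⟨𝒳′₁, G_D⟩` : as `𝒳₁` but with `t = t′` (a triple point). -/
def pairL1' (f : Fin 3 → ℝ → E3) : ℝ := pairL f 0 1 2 0 fun p q => p.1 = q.2

/-- `⟨𝒳′₂, G_D⟩` : as `𝒳₂` but with `u = u′` (a triple point). -/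
def pairL2' (f : Fin 3 → ℝ → E3) : ℝ := pairL f 0 1 2 1 fun p q => p.2 = q.2

/-- `⟨𝒳′₃, G_D⟩` : as `𝒳₃` but with `v = v′` (a triple point). -/
def pairL3' (f : Fin 3 → ℝ → E3) : ℝ := pairL f 0 2 2 1 fun p q => p.2 = q.1

/-! ### The localized unit 2-form `η` on `S²` -/

/-- The action of a 2×2 matrix on `ℝ³ = ℝ² × ℝ`, acting on the first two coordinates. -/
def act2 (A : Matrix (Fin 2) (Fin 2) ℝ) (v : E3) : E3 :=
  mk3 (A 0 0 * v 0 + A 0 1 * v 1) (A 1 0 * v 0 + A 1 1 * v 1) (v 2)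

/-- `IsEtaForm ε g` says that `η = g · (standard area form of S²)` is a smooth 2-form on
`S²` such that: (i) `supp η` lies in the `ε`-neighbourhood of the north pole `N`;
(ii) `φ*η = det φ · η` for every `φ ∈ O(2) ⊆ O(3)` (since `φ* (area form) = det φ ·
(area form)`, this amounts to `g ∘ φ = g`); (iii) `∫_{S²} η = 1`, i.e. the integral of
`g` against the surface measure of `S²` is `1`. -/
def IsEtaForm (ε : ℝ) (g : E3 → ℝ) : Prop :=
  ContDiff ℝ (⊤ : ℕ∞) g ∧
  (∀ v : E3, ‖v‖ = 1 → g v ≠ 0 → ‖v - NP‖ < ε) ∧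
  (∀ A : Matrix (Fin 2) (Fin 2) ℝ, A * A.transpose = 1 →
    ∀ v : E3, ‖v‖ = 1 → g (act2 A v) = g v) ∧
  ∫ v : Metric.sphere (0 : E3) 1, g v ∂((volume : Measure E3).toSphere) = 1

/-! ### Configuration space integrals -/

/-- `i`-th partial derivative of a map `ℝⁿ → ℝ³`. -/
def pdv {n : ℕ} (h : EuclideanSpace ℝ (Fin n) → E3) (i : Fin n)
    (x : EuclideanSpace ℝ (Fin n)) : E3 :=
  fderiv ℝ h x (EuclideanSpace.single i 1)

/-- The pullback `h*η` (for `η = g · (area form)`) evaluated at the point `x` on the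
coordinate vectors `(e_i, e_j)`. -/
def form2 {n : ℕ} (g : E3 → ℝ) (h : EuclideanSpace ℝ (Fin n) → E3)
    (x : EuclideanSpace ℝ (Fin n)) (i j : Fin n) : ℝ :=
  g (h x) * det3 (h x) (pdv h i x) (pdv h j x)

/-- `(h*η ∧ k*η)(e₀, e₁, e₂, e₃)` at `x`. -/
def wedge22 (g : E3 → ℝ) (h k : E4 → E3) (x : E4) : ℝ :=
  (1 / 4) * ∑ σ : Equiv.Perm (Fin 4),
    ((Equiv.Perm.sign σ : ℤ) : ℝ) * form2 g h x (σ 0) (σ 1) * form2 g k x (σ 2) (σ 3)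

/-- `(h*η ∧ k*η ∧ l*η)(e₀, …, e₅)` at `x`. -/
def wedge222 (g : E3 → ℝ) (h k l : E6 → E3) (x : E6) : ℝ :=
  (1 / 8) * ∑ σ : Equiv.Perm (Fin 6),
    ((Equiv.Perm.sign σ : ℤ) : ℝ) * form2 g h x (σ 0) (σ 1) * form2 g k x (σ 2) (σ 3) *
      form2 g l x (σ 4) (σ 5)

/-- The configuration space `C_X = {x₁ < x₂ < x₃ < x₄}`. -/
def CX : Set E4 := {x | x 0 < x 1 ∧ x 1 < x 2 ∧ x 2 < x 3}

/-- The integrand `ω_X = h₁₃*η ∧ h₄₂*η` for a long knot. -/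
def omegaX (f : ℝ → E3) (g : E3 → ℝ) : E4 → ℝ :=
  wedge22 g (fun x => unitv (f (x 2) - f (x 0))) (fun x => unitv (f (x 1) - f (x 3)))

/-- The configuration space integral `I_X(f)` of a long knot. -/
def IX (f : ℝ → E3) (g : E3 → ℝ) : ℝ := ∫ x in CX, omegaX f g x

/-- The free point `x₄ ∈ ℝ³` in a `Y`-configuration `(x₁,x₂,x₃;x₄) ∈ ℝ³ × ℝ³ = ℝ⁶`. -/
def ptY (x : E6) : E3 := mk3 (x 3) (x 4) (x 5)

/-- The configuration space `C_Y(f)` for a long knot. -/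
def CY (f : ℝ → E3) : Set E6 :=
  {x | x 0 < x 1 ∧ x 1 < x 2 ∧ ptY x ≠ f (x 0) ∧ ptY x ≠ f (x 1) ∧ ptY x ≠ f (x 2)}

/-- The integrand `ω_Y = h₁₄*η ∧ h₄₂*η ∧ h₃₄*η` for a long knot. -/
def omegaY (f : ℝ → E3) (g : E3 → ℝ) : E6 → ℝ :=
  wedge222 g (fun x => unitv (ptY x - f (x 0))) (fun x => unitv (f (x 1) - ptY x))
    (fun x => unitv (ptY x - f (x 2)))

/-- The configuration space integral `I_Y(f)` of a long knot. -/
def IY (f : ℝ → E3) (g : E3 → ℝ) : ℝ := ∫ x in CY f, omegaY f g x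

def CL1 : Set E4 := {x | x 0 < x 1}
def CL2 : Set E4 := {x | x 1 < x 2}
def CL3 : Set E4 := {x | x 2 < x 3}

/-- The integrand of `I_{𝒳₁}(f)` for a 3-component long link. -/
def omegaL1 (f : Fin 3 → ℝ → E3) (g : E3 → ℝ) : E4 → ℝ :=
  wedge22 g (fun x => unitv (f 1 (x 2) - f 0 (x 0))) (fun x => unitv (f 2 (x 3) - f 0 (x 1)))

/-- The integrand of `I_{𝒳₂}(f)` for a 3-component long link. -/
def omegaL2 (f : Fin 3 → ℝ → E3) (g : E3 → ℝ) : E4 → ℝ :=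
  wedge22 g (fun x => unitv (f 1 (x 1) - f 0 (x 0))) (fun x => unitv (f 1 (x 2) - f 2 (x 3)))

/-- The integrand of `I_{𝒳₃}(f)` for a 3-component long link. -/
def omegaL3 (f : Fin 3 → ℝ → E3) (g : E3 → ℝ) : E4 → ℝ :=
  wedge22 g (fun x => unitv (f 2 (x 2) - f 0 (x 0))) (fun x => unitv (f 1 (x 1) - f 2 (x 3)))

/-- The configuration space integral `I_{𝒳₁}(f)`. -/
def IL1 (f : Fin 3 → ℝ → E3) (g : E3 → ℝ) : ℝ := ∫ x in CL1, omegaL1 f g x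

/-- The configuration space integral `I_{𝒳₂}(f)`. -/
def IL2 (f : Fin 3 → ℝ → E3) (g : E3 → ℝ) : ℝ := ∫ x in CL2, omegaL2 f g x

/-- The configuration space integral `I_{𝒳₃}(f)`. -/
def IL3 (f : Fin 3 → ℝ → E3) (g : E3 → ℝ) : ℝ := ∫ x in CL3, omegaL3 f g x

/-- The configuration space `C_𝒴(f)` for a 3-component long link. -/
def CYL (f : Fin 3 → ℝ → E3) : Set E6 :=
  {x | ptY x ≠ f 0 (x 0) ∧ ptY x ≠ f 1 (x 1) ∧ ptY x ≠ f 2 (x 2)}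

/-- The integrand `ω_𝒴 = h₁₄*η ∧ h₄₂*η ∧ h₃₄*η` for a 3-component long link. -/
def omegaYL (f : Fin 3 → ℝ → E3) (g : E3 → ℝ) : E6 → ℝ :=
  wedge222 g (fun x => unitv (ptY x - f 0 (x 0))) (fun x => unitv (f 1 (x 1) - ptY x))
    (fun x => unitv (ptY x - f 2 (x 2)))

/-- The configuration space integral `I_𝒴(f)`. -/
def ILY (f : Fin 3 → ℝ → E3) (g : E3 → ℝ) : ℝ := ∫ x in CYL f, omegaYL f g x

/-! ### Model triple points -/

/-- The affine parametrization `t ↦ a + t • v` of a straight segment. -/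
def seg (a v : E3) (t : ℝ) : E3 := a + t • v

/-- A model triple point: three straight segments `S₁, S₂, S₃` (indexed by `0, 1, 2`),
`S_k` parametrized by `seg (a k) (v k) : (-δ, δ) → ℝ³`, all parallel to the plane
`N^⊥`, whose projections to `N^⊥` meet pairwise transversely at the single common point
which is the projection of each midpoint `a k`, and with `S₂` higher than `S₁`, `S₃`. -/
def IsModelTriple (a v : Fin 3 → E3) : Prop :=
  (∀ k, v k 2 = 0) ∧ (∀ k, v k ≠ 0) ∧
  pr12 (a 0) = pr12 (a 1) ∧ pr12 (a 1) = pr12 (a 2) ∧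
  (∀ j k, j ≠ k → cross2 (v j) (v k) ≠ 0) ∧
  a 0 2 < a 1 2 ∧ a 2 2 < a 1 2

/-- A model triple point of type `(←, s₁, s₂, s₃)`: `S₁` passes over `S₃`, and the signs
of the crossings `S₁–S₃`, `S₁–S₂`, `S₂–S₃` are `s₁, s₂, s₃` respectively. -/
def ModelLeft (a v : Fin 3 → E3) (s1 s2 s3 : ℝ) : Prop :=
  IsModelTriple a v ∧ a 2 2 < a 0 2 ∧
  s1 = Real.sign (cross2 (v 0) (v 2)) ∧
  s2 = Real.sign (cross2 (v 1) (v 0)) ∧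
  s3 = Real.sign (cross2 (v 1) (v 2))

/-- A model triple point of type `(→, s₁, s₂, s₃)`: `S₃` passes over `S₁`, and the signs
of the crossings `S₁–S₃`, `S₁–S₂`, `S₂–S₃` are `s₁, s₂, s₃` respectively. -/
def ModelRight (a v : Fin 3 → E3) (s1 s2 s3 : ℝ) : Prop :=
  IsModelTriple a v ∧ a 0 2 < a 2 2 ∧
  s1 = Real.sign (cross2 (v 2) (v 0)) ∧
  s2 = Real.sign (cross2 (v 1) (v 0)) ∧
  s3 = Real.sign (cross2 (v 1) (v 2))

/-- The cube `(-δ, δ)⁴ ⊆ ℝ⁴`. -/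
def cube4 (δ : ℝ) : Set E4 := {x | ∀ i, |x i| < δ}

/-- The model configuration space integral `I_X^{X′₁}`: the two points `t₁ < t₂` lie on
`S₁`, the point `t₃` on `S₂` and the point `t₄` on `S₃`; the maps are
`h₁₃ = unit (f₂(t₃) - f₁(t₁))` and `h₄₂ = unit (f₁(t₂) - f₃(t₄))`. -/
def IX1model (a v : Fin 3 → E3) (δ : ℝ) (g : E3 → ℝ) : ℝ :=
  ∫ x in cube4 δ ∩ {x : E4 | x 0 < x 1},
    wedge22 g (fun x => unitv (seg (a 1) (v 1) (x 2) - seg (a 0) (v 0) (x 0)))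
      (fun x => unitv (seg (a 0) (v 0) (x 1) - seg (a 2) (v 2) (x 3))) x

/-- The model configuration space integral `I_X^{X′₂}` (`(X′₂, l)` for a model of type
`←`, `(X′₂, r)` for a model of type `→`): the two points `t₂ < t₃` lie on `S₂`, the
point `t₁` on `S₁` and the point `t₄` on `S₃`; the maps are
`h₁₃ = unit (f₂(t₃) - f₁(t₁))` and `h₄₂ = unit (f₂(t₂) - f₃(t₄))`. -/
def IX2model (a v : Fin 3 → E3) (δ : ℝ) (g : E3 → ℝ) : ℝ :=
  ∫ x in cube4 δ ∩ {x : E4 | x 1 < x 2},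
    wedge22 g (fun x => unitv (seg (a 1) (v 1) (x 2) - seg (a 0) (v 0) (x 0)))
      (fun x => unitv (seg (a 1) (v 1) (x 1) - seg (a 2) (v 2) (x 3))) x

/-- The model configuration space integral `I_X^{X′₃}`: the two points `t₃ < t₄` lie on
`S₃`, the point `t₁` on `S₁` and the point `t₂` on `S₂`; the maps are
`h₁₃ = unit (f₃(t₃) - f₁(t₁))` and `h₄₂ = unit (f₂(t₂) - f₃(t₄))`. -/
def IX3model (a v : Fin 3 → E3) (δ : ℝ) (g : E3 → ℝ) : ℝ :=
  ∫ x in cube4 δ ∩ {x : E4 | x 2 < x 3},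
    wedge22 g (fun x => unitv (seg (a 2) (v 2) (x 2) - seg (a 0) (v 0) (x 0)))
      (fun x => unitv (seg (a 1) (v 1) (x 1) - seg (a 2) (v 2) (x 3))) x

/-- The model `Y`-integral `I_Y^{s₁,s₂,s₃}` over `(-δ,δ)³ × ℝ³`: the point `t_k` lies on
`S_k` and `x₄ ∈ ℝ³` is free; the maps are `h₁₄ = unit (x₄ - f₁(t₁))`,
`h₄₂ = unit (f₂(t₂) - x₄)` and `h₃₄ = unit (x₄ - f₃(t₃))`. -/
def IYmodel (a v : Fin 3 → E3) (δ : ℝ) (g : E3 → ℝ) : ℝ :=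
  ∫ x in {x : E6 | |x 0| < δ ∧ |x 1| < δ ∧ |x 2| < δ ∧
      ptY x ≠ seg (a 0) (v 0) (x 0) ∧ ptY x ≠ seg (a 1) (v 1) (x 1) ∧
      ptY x ≠ seg (a 2) (v 2) (x 2)},
    wedge222 g (fun x => unitv (ptY x - seg (a 0) (v 0) (x 0)))
      (fun x => unitv (seg (a 1) (v 1) (x 1) - ptY x))
      (fun x => unitv (ptY x - seg (a 2) (v 2) (x 2))) x

/-- Near every (triple or higher) multiple point of the diagram, the strands of the long
knot `f` are straight segments parallel to the plane `N^⊥`. -/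
def StraightNearMultipleK (f : ℝ → E3) : Prop :=
  ∀ t u v : ℝ, t ≠ u → u ≠ v → t ≠ v →
    pr12 (f t) = pr12 (f u) → pr12 (f u) = pr12 (f v) →
    ∃ δ > (0 : ℝ), ∃ w : E3, w 2 = 0 ∧ ∀ s : ℝ, |s - t| < δ → f s = f t + (s - t) • w

/-- Near every (triple or higher) multiple point of the diagram, the strands of the long
link `f` are straight segments parallel to the plane `N^⊥`. -/
def StraightNearMultipleL (f : Fin 3 → ℝ → E3) : Prop :=
  ∀ (i j k : Fin 3) (t u v : ℝ), (i, t) ≠ (j, u) → (j, u) ≠ (k, v) → (i, t) ≠ (k, v) →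
    pr12 (f i t) = pr12 (f j u) → pr12 (f j u) = pr12 (f k v) →
    ∃ δ > (0 : ℝ), ∃ w : E3, w 2 = 0 ∧ ∀ s : ℝ, |s - t| < δ → f i s = f i t + (s - t) • w

/-! ### Closed 2-component links and the linking number -/

/-- A smooth loop in `ℝ³`, parametrized with period 1 and injective on a period. -/
def IsLoop (f : ℝ → E3) : Prop :=
  ContDiff ℝ (⊤ : ℕ∞) f ∧ (∀ t, f (t + 1) = f t) ∧ (∀ t, deriv f t ≠ 0) ∧
    ∀ s t : ℝ, f s = f t → ∃ n : ℤ, t - s = n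

/-- The diagram of the 2-component link `(f 0, f 1)` has only transverse double points. -/
def OnlyDouble2 (f : Fin 2 → ℝ → E3) : Prop :=
  (∀ i j s t, f i s ≠ f j t → pr12 (f i s) = pr12 (f j t) →
      cross2 (deriv (f i) s) (deriv (f j) t) ≠ 0) ∧
  ∀ i j k s t u, f i s ≠ f j t → f j t ≠ f k u → f i s ≠ f k u →
    pr12 (f i s) = pr12 (f j t) → pr12 (f j t) = pr12 (f k u) → False

/-- The crossings of the diagram at which `f₂` passes over `f₁` (one parameter period). -/
def Crossing12 (f₁ f₂ : ℝ → E3) : Set (ℝ × ℝ) :=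
  {p | p.1 ∈ Ico (0 : ℝ) 1 ∧ p.2 ∈ Ico (0 : ℝ) 1 ∧
    pr12 (f₁ p.1) = pr12 (f₂ p.2) ∧ pr3 (f₁ p.1) < pr3 (f₂ p.2)}

/-- The sum of the signs of the crossings of the diagram at which `f₂` passes over `f₁`;
this is the linking number `lk(f₁, f₂)`, i.e. the mapping degree of
`h : S¹ × S¹ → S²`. -/
def lkSum (f₁ f₂ : ℝ → E3) : ℝ :=
  ∑ᶠ p ∈ Crossing12 f₁ f₂, Real.sign (cross2 (deriv f₂ p.2) (deriv f₁ p.1))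

/-- The fundamental domain `[0,1) × [0,1)` of `S¹ × S¹`. -/
def sq01 : Set E2 := {x | x 0 ∈ Ico (0 : ℝ) 1 ∧ x 1 ∈ Ico (0 : ℝ) 1}

/-- `∫_{S¹×S¹} h*η` for `h(x₁,x₂) = unit (f₂(x₂) - f₁(x₁))`. -/
def lkIntegral (f₁ f₂ : ℝ → E3) (g : E3 → ℝ) : ℝ :=
  ∫ x in sq01, form2 g (fun x : E2 => unitv (f₂ (x 1) - f₁ (x 0))) x 0 1

/-!
Near the north pole `N` the central projection is a chart `(p, q)` of `S²` in which
`η = ψ(p, q) dp ∧ dq`. Since the segments are horizontal and meet in one point after projection, in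
the product chart the pair `(h₁₃, h₄₂)` is a linear map `M` of `ℝ⁴`, the integrand is
`det M · (ψ ⊗ ψ)(M x)`, and `det M` has the sign `s₂ s₃`. For small `ε` the support of
`(ψ ⊗ ψ) ∘ M` lies inside the cube, so only the condition `t₂ < t₃` restricts the domain; invariance
of `η` under the rotation by `π` makes `ψ` even, so this half space contributes exactly one half.
The change of variables `y = M x` then shows that the model integral is `s₂ s₃ · ½ ∫ ψ ⊗ ψ`, which
depends on the model only through `s₂ s₃`.
-/

section Sign

lemma realSign_mul (r s : ℝ) : Real.sign (r * s) = Real.sign r * Real.sign s := by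
  rcases lt_trichotomy r 0 with hr | rfl | hr <;> rcases lt_trichotomy s 0 with hs | rfl | hs <;>
    simp [Real.sign_of_neg, Real.sign_of_pos, mul_pos_of_neg_of_neg, mul_neg_of_neg_of_pos,
      mul_neg_of_pos_of_neg, *]

lemma mul_inv_abs_eq_realSign (r : ℝ) : r * |r|⁻¹ = Real.sign r := by
  rcases lt_trichotomy r 0 with hr | rfl | hr
  · rw [abs_of_neg hr, Real.sign_of_neg hr, inv_neg, mul_neg, mul_inv_cancel₀ hr.ne]
  · simp
  · rw [abs_of_pos hr, Real.sign_of_pos hr, mul_inv_cancel₀ hr.ne']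

end Sign

section Integration

lemma setIntegral_pos_eq_half_integral {E V : Type*} [MeasurableSpace E] [AddGroup E]
    [MeasurableNeg E] [NormedAddCommGroup V] [NormedSpace ℝ V] {μ : Measure E} [μ.IsNegInvariant]
    {f : E → ℝ} {F : E → V} (hf : Measurable f) (hf_odd : ∀ x, f (-x) = -f x)
    (hf_ne : ∀ᵐ x ∂μ, f x ≠ 0) (hF : Integrable F μ) (hF_even : ∀ x, F (-x) = F x) :
    ∫ x in {x | 0 < f x}, F x ∂μ = (2⁻¹ : ℝ) • ∫ x, F x ∂μ := by
  have hpos : MeasurableSet {x | 0 < f x} := measurableSet_lt measurable_const hf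
  have hneg : MeasurableSet {x | f x < 0} := measurableSet_lt hf measurable_const
  have hcompl : ({x | 0 < f x}ᶜ : Set E) =ᵐ[μ] {x | f x < 0} := by
    filter_upwards [hf_ne] with x hx
    exact propext (not_lt.trans hx.le_iff_lt)
  have hswap : ∫ x in {x | f x < 0}, F x ∂μ = ∫ x in {x | 0 < f x}, F x ∂μ := by
    rw [← integral_indicator hneg, ← integral_indicator hpos, ← integral_neg_eq_self]
    simp [indicator, hf_odd, hF_even]
  rw [← integral_add_compl hpos hF, setIntegral_congr_set hcompl, hswap, ← two_smul ℝ,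
    inv_smul_smul₀ two_ne_zero]

variable {E : Type*} [NormedAddCommGroup E] [NormedSpace ℝ E] [FiniteDimensional ℝ E]
  [MeasurableSpace E] [BorelSpace E] (μ : Measure E) [μ.IsAddHaarMeasure]

lemma ae_linearMap_ne_zero {f : E →ₗ[ℝ] ℝ} (hf : f ≠ 0) : ∀ᵐ x ∂μ, f x ≠ 0 := by
  rw [ae_iff]
  simpa using! Measure.addHaar_submodule μ f.ker (by rwa [Ne, LinearMap.ker_eq_top])

lemma integral_comp_linearMap {V : Type*} [NormedAddCommGroup V] [NormedSpace ℝ V]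
    {L : E →ₗ[ℝ] E} (hL : LinearMap.det L ≠ 0) (F : E → V) :
    ∫ x, F (L x) ∂μ = |LinearMap.det L|⁻¹ • ∫ y, F y ∂μ := by
  have hemb : MeasurableEmbedding L :=
    (LinearMap.equivOfDetNeZero L hL).toContinuousLinearEquiv.toHomeomorph.measurableEmbedding
  rw [← hemb.integral_map, Measure.map_linearMap_addHaar_eq_smul_addHaar μ hL,
    integral_smul_measure, ENNReal.toReal_ofReal (abs_nonneg _), abs_inv]

end Integration

section Gnomonic

@[simp] lemma mk3_apply_zero (x y z : ℝ) : mk3 x y z 0 = x := rfl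
@[simp] lemma mk3_apply_one (x y z : ℝ) : mk3 x y z 1 = y := rfl
@[simp] lemma mk3_apply_two (x y z : ℝ) : mk3 x y z 2 = z := rfl

lemma mk3_one_ne_zero (p q : ℝ) : mk3 p q 1 ≠ 0 := fun h ↦
  one_ne_zero (congrArg (fun v : E3 ↦ v 2) h)

lemma mk3_eq_smul_add (x y z : ℝ) : mk3 x y z = x • mk3 1 0 0 + y • mk3 0 1 0 + mk3 0 0 z := by
  ext i; fin_cases i <;> simp

lemma norm_mk3_neg_neg (x y z : ℝ) : ‖mk3 (-x) (-y) z‖ = ‖mk3 x y z‖ := by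
  simp [EuclideanSpace.norm_eq, Fin.sum_univ_three]

lemma continuous_mk3 : Continuous fun y : ℝ × ℝ ↦ mk3 y.1 y.2 1 := by
  have hsum : Continuous fun y : ℝ × ℝ ↦ y.1 • mk3 1 0 0 + y.2 • mk3 0 1 0 + mk3 0 0 1 := by
    fun_prop
  exact hsum.congr fun y ↦ (mk3_eq_smul_add y.1 y.2 1).symm

lemma norm_unitv {w : E3} (hw : w ≠ 0) : ‖unitv w‖ = 1 :=
  norm_smul_inv_norm (𝕜 := ℝ) hw

lemma unitv_smul {c : ℝ} (hc : 0 < c) (w : E3) : unitv (c • w) = unitv w := by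
  rw [unitv, norm_smul, smul_smul, Real.norm_of_nonneg hc.le, mul_inv_rev,
    inv_mul_cancel_right₀ hc.ne', unitv]

/-- The inverse of the central projection of the open upper hemisphere of `S²` to the tangent
plane at the north pole. -/
def gnomonic (p q : ℝ) : E3 := unitv (mk3 p q 1)

/-- The coefficient `ψ` of `dp ∧ dq` in the pullback of `η = g · (area form)` along the chart
`gnomonic`. -/
def gnomonicDensity (g : E3 → ℝ) (p q : ℝ) : ℝ := g (gnomonic p q) * ‖mk3 p q 1‖⁻¹ ^ 3

lemma norm_gnomonic (p q : ℝ) : ‖gnomonic p q‖ = 1 := norm_unitv (mk3_one_ne_zero p q)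

lemma gnomonic_neg (p q : ℝ) : gnomonic (-p) (-q) = act2 (-1) (gnomonic p q) := by
  ext i
  fin_cases i <;> simp [gnomonic, unitv, act2, norm_mk3_neg_neg]

lemma unitv_eq_gnomonic {w : E3} (hw : 0 < w 2) : unitv w = gnomonic (w 0 / w 2) (w 1 / w 2) := by
  have hw_eq : w = w 2 • mk3 (w 0 / w 2) (w 1 / w 2) 1 := by
    ext i
    fin_cases i <;> simp [mul_div_assoc', hw.ne']
  rw [hw_eq, unitv_smul hw, ← hw_eq, gnomonic]

lemma abs_lt_of_norm_gnomonic_sub_lt {p q ε : ℝ} (hε : ε ≤ 1 / 2)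
    (h : ‖gnomonic p q - NP‖ < ε) : |p| < 2 * ε ∧ |q| < 2 * ε := by
  have hcoord (i : Fin 3) : |(gnomonic p q - NP) i| < ε := (PiLp.norm_apply_le _ i).trans_lt h
  set r := ‖mk3 p q 1‖⁻¹ with hr
  have h0 : |r * p| < ε := by simpa [gnomonic, unitv, NP, hr] using hcoord 0
  have h1 : |r * q| < ε := by simpa [gnomonic, unitv, NP, hr] using hcoord 1
  have h2 : |r - 1| < ε := by simpa [gnomonic, unitv, NP, hr] using hcoord 2
  have hr_half : 1 / 2 < r := by linarith [(abs_lt.mp h2).1]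
  rw [abs_mul, abs_of_pos (by linarith : 0 < r)] at h0 h1
  constructor <;> nlinarith [abs_nonneg p, abs_nonneg q]

lemma continuous_gnomonicDensity {g : E3 → ℝ} (hg : Continuous g) :
    Continuous fun y : ℝ × ℝ ↦ gnomonicDensity g y.1 y.2 := by
  have hinv : Continuous fun y : ℝ × ℝ ↦ ‖mk3 y.1 y.2 1‖⁻¹ :=
    continuous_mk3.norm.inv₀ fun y ↦ norm_ne_zero_iff.mpr (mk3_one_ne_zero y.1 y.2)
  exact (hg.comp (hinv.smul continuous_mk3)).mul (hinv.pow 3)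

/-- The coefficient of `dy₀ ∧ dy₁ ∧ dy₂ ∧ dy₃` in the pullback of `η × η` along the product chart
`(y₀, y₁, y₂, y₃) ↦ (gnomonic y₀ y₁, gnomonic y₂ y₃)` of `S² × S²`. -/
def gnomonicDensity₂ (g : E3 → ℝ) (y : E4) : ℝ :=
  gnomonicDensity g (y 0) (y 1) * gnomonicDensity g (y 2) (y 3)

lemma continuous_gnomonicDensity₂ {g : E3 → ℝ} (hg : Continuous g) :
    Continuous (gnomonicDensity₂ g) :=
  ((continuous_gnomonicDensity hg).comp (f := fun y : E4 ↦ (y 0, y 1)) (by fun_prop)).mul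
    ((continuous_gnomonicDensity hg).comp (f := fun y : E4 ↦ (y 2, y 3)) (by fun_prop))

namespace IsEtaForm

variable {ε : ℝ} {g : E3 → ℝ}

lemma gnomonicDensity_neg (hg : IsEtaForm ε g) (p q : ℝ) :
    gnomonicDensity g (-p) (-q) = gnomonicDensity g p q := by
  rw [gnomonicDensity, gnomonic_neg, norm_mk3_neg_neg,
    hg.2.2.1 (-1) (by simp) _ (norm_gnomonic p q), gnomonicDensity]

lemma gnomonicDensity₂_neg (hg : IsEtaForm ε g) (y : E4) :
    gnomonicDensity₂ g (-y) = gnomonicDensity₂ g y := by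
  simp only [gnomonicDensity₂, PiLp.neg_apply, hg.gnomonicDensity_neg]

lemma support_gnomonicDensity₂_subset (hg : IsEtaForm ε g) (hε : ε ≤ 1 / 2) :
    Function.support (gnomonicDensity₂ g) ⊆ cube4 (2 * ε) := by
  have hbound {p q : ℝ} (h : gnomonicDensity g p q ≠ 0) : |p| < 2 * ε ∧ |q| < 2 * ε :=
    abs_lt_of_norm_gnomonic_sub_lt hε (hg.2.1 _ (norm_gnomonic p q) (left_ne_zero_of_mul h))
  intro y hy i
  obtain ⟨h0, h1⟩ := hbound (left_ne_zero_of_mul hy)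
  obtain ⟨h2, h3⟩ := hbound (right_ne_zero_of_mul hy)
  fin_cases i <;> assumption

end IsEtaForm

end Gnomonic

section Forms

variable {n : ℕ} {x : EuclideanSpace ℝ (Fin n)}

-- The radial part of the derivative of `unitv ∘ w` is a multiple of `w x`, which `det3` kills.
lemma form2_unitv (g : E3 → ℝ) {w : EuclideanSpace ℝ (Fin n) → E3} (hw : DifferentiableAt ℝ w x)
    (hne : w x ≠ 0) (i j : Fin n) :
    form2 g (fun x ↦ unitv (w x)) x i j =
      g (unitv (w x)) * (‖w x‖⁻¹ ^ 3 * det3 (w x) (pdv w i x) (pdv w j x)) := by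
  have hnorm : DifferentiableAt ℝ (fun x ↦ ‖w x‖⁻¹) x :=
    (hw.norm ℝ hne).inv (norm_ne_zero_iff.mpr hne)
  simp only [form2, pdv, unitv]
  rw [fderiv_fun_smul hnorm hw]
  simp only [det3, add_apply, smul_apply, ContinuousLinearMap.smulRight_apply, PiLp.add_apply,
    PiLp.smul_apply, smul_eq_mul]
  ring

lemma form2_gnomonic (g : E3 → ℝ) {p q : EuclideanSpace ℝ (Fin n) → ℝ}
    {p' q' : EuclideanSpace ℝ (Fin n) →L[ℝ] ℝ} (hp : HasFDerivAt p p' x)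
    (hq : HasFDerivAt q q' x) (i j : Fin n) :
    form2 g (fun x ↦ gnomonic (p x) (q x)) x i j = gnomonicDensity g (p x) (q x) *
      (p' (EuclideanSpace.single i 1) * q' (EuclideanSpace.single j 1) -
        q' (EuclideanSpace.single i 1) * p' (EuclideanSpace.single j 1)) := by
  have hw : HasFDerivAt (fun x ↦ mk3 (p x) (q x) 1)
      (p'.smulRight (mk3 1 0 0) + q'.smulRight (mk3 0 1 0)) x := by
    exact (((hp.smul_const _).add (hq.smul_const _)).add_const _).congr_of_eventuallyEq
      (.of_forall fun x ↦ mk3_eq_smul_add (p x) (q x) 1)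
  simp only [gnomonic, gnomonicDensity]
  rw [form2_unitv g hw.differentiableAt (mk3_one_ne_zero _ _), pdv, pdv, hw.fderiv]
  simp only [det3, add_apply, ContinuousLinearMap.smulRight_apply, PiLp.add_apply,
    PiLp.smul_apply, mk3_apply_zero, mk3_apply_one, mk3_apply_two, smul_eq_mul]
  ring

lemma sum_sign_mul_minor_mul_minor {R : Type*} [CommRing R] (M : Matrix (Fin 4) (Fin 4) R) :
    ∑ σ : Equiv.Perm (Fin 4), ((Equiv.Perm.sign σ : ℤ) : R) *
        (M 0 (σ 0) * M 1 (σ 1) - M 1 (σ 0) * M 0 (σ 1)) *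
        (M 2 (σ 2) * M 3 (σ 3) - M 3 (σ 2) * M 2 (σ 3)) = 4 * M.det := by
  let p (τ σ : Equiv.Perm (Fin 4)) : R := ((Equiv.Perm.sign σ : ℤ) : R) *
    (M (τ 0) (σ 0) * M (τ 1) (σ 1) * (M (τ 2) (σ 2) * M (τ 3) (σ 3)))
  have hp (τ : Equiv.Perm (Fin 4)) : ∑ σ, p τ σ = ((Equiv.Perm.sign τ : ℤ) : R) * M.det := by
    rw [← Matrix.det_permute, ← Matrix.det_transpose, Matrix.det_apply']
    simp [p, Fin.prod_univ_four, mul_assoc]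
  calc
    _ = ∑ σ, (p 1 σ - p (Equiv.swap 0 1) σ - p (Equiv.swap 2 3) σ +
          p (Equiv.swap 0 1 * Equiv.swap 2 3) σ) :=
      Finset.sum_congr rfl fun σ _ ↦ by
        simp only [p, Equiv.Perm.coe_one, id_eq, Equiv.Perm.coe_mul, Function.comp_apply,
          Equiv.swap_apply_def, Fin.reduceEq, ↓reduceIte]
        ring
    _ = 4 * M.det := by
      simp only [Finset.sum_add_distrib, Finset.sum_sub_distrib, hp, Equiv.Perm.sign_mul,
        Equiv.Perm.sign_one, Equiv.Perm.sign_swap (show (0 : Fin 4) ≠ 1 by decide),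
        Equiv.Perm.sign_swap (show (2 : Fin 4) ≠ 3 by decide)]
      push_cast
      ring

lemma wedge22_gnomonic (g : E3 → ℝ) (M : Matrix (Fin 4) (Fin 4) ℝ) (x : E4) :
    wedge22 g (fun x ↦ gnomonic (M.toEuclideanLin x 0) (M.toEuclideanLin x 1))
      (fun x ↦ gnomonic (M.toEuclideanLin x 2) (M.toEuclideanLin x 3)) x =
      M.det * gnomonicDensity₂ g (M.toEuclideanLin x) := by
  let row (i : Fin 4) : E4 →L[ℝ] ℝ :=
    EuclideanSpace.proj i ∘L LinearMap.toContinuousLinearMap M.toEuclideanLin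
  have hrow (i : Fin 4) : HasFDerivAt (fun x ↦ M.toEuclideanLin x i) (row i) x :=
    (row i).hasFDerivAt
  have hrow_single (i j : Fin 4) : row i (EuclideanSpace.single j 1) = M i j := by
    simp [row]
  simp only [wedge22, form2_gnomonic g (hrow _) (hrow _), hrow_single]
  calc
    _ = 1 / 4 * ((4 * M.det) * gnomonicDensity₂ g (M.toEuclideanLin x)) := by
      rw [← sum_sign_mul_minor_mul_minor, Finset.sum_mul]
      congr 1
      refine Finset.sum_congr rfl fun σ _ ↦ ?_
      rw [gnomonicDensity₂]
      ring
    _ = M.det * gnomonicDensity₂ g (M.toEuclideanLin x) := by ring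

end Forms

section ModelTriple

/-- The product of the signs of the two crossings of the middle strand `S₂` of a triple point with
`S₁` and `S₃`. -/
def overSign (v : Fin 3 → E3) : ℝ :=
  Real.sign (cross2 (v 1) (v 0)) * Real.sign (cross2 (v 1) (v 2))

lemma ModelLeft.overSign_eq {a v : Fin 3 → E3} {s1 s2 s3 : ℝ} (h : ModelLeft a v s1 s2 s3) :
    overSign v = s2 * s3 := by
  rw [overSign, ← h.2.2.2.1, ← h.2.2.2.2]

lemma ModelRight.overSign_eq {a v : Fin 3 → E3} {s1 s2 s3 : ℝ} (h : ModelRight a v s1 s2 s3) :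
    overSign v = s2 * s3 := by
  rw [overSign, ← h.2.2.2.1, ← h.2.2.2.2]

/-- The matrix of the pair of direction maps `(h₁₃, h₄₂)` of a model triple point in the product
gnomonic chart. -/
def modelMatrix (a v : Fin 3 → E3) : Matrix (Fin 4) (Fin 4) ℝ :=
  let h := a 1 2 - a 0 2
  let k := a 1 2 - a 2 2
  !![-v 0 0 / h, 0, v 1 0 / h, 0;
     -v 0 1 / h, 0, v 1 1 / h, 0;
     0, v 1 0 / k, 0, -v 2 0 / k;
     0, v 1 1 / k, 0, -v 2 1 / k]

lemma det_modelMatrix (a v : Fin 3 → E3) :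
    (modelMatrix a v).det = cross2 (v 1) (v 0) * cross2 (v 1) (v 2) *
      (((a 1 2 - a 0 2) * (a 1 2 - a 2 2)) ^ 2)⁻¹ := by
  simp [modelMatrix, Matrix.det_succ_row_zero, Fin.sum_univ_succ, cross2, Fin.succAbove]
  field_simp
  ring

namespace IsModelTriple

variable {a v : Fin 3 → E3}

lemma det_modelMatrix_ne_zero (h : IsModelTriple a v) : (modelMatrix a v).det ≠ 0 := by
  obtain ⟨-, -, -, -, hcross, h01, h21⟩ := h
  rw [det_modelMatrix]
  exact mul_ne_zero (mul_ne_zero (hcross 1 0 (by decide)) (hcross 1 2 (by decide)))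
    (inv_ne_zero (pow_ne_zero 2 (mul_ne_zero (sub_pos.mpr h01).ne' (sub_pos.mpr h21).ne')))

lemma sign_det_modelMatrix (h : IsModelTriple a v) :
    Real.sign (modelMatrix a v).det = overSign v := by
  obtain ⟨-, -, -, -, -, h01, h21⟩ := h
  have hpos : 0 < (((a 1 2 - a 0 2) * (a 1 2 - a 2 2)) ^ 2)⁻¹ :=
    inv_pos.mpr (pow_pos (mul_pos (sub_pos.mpr h01) (sub_pos.mpr h21)) 2)
  rw [det_modelMatrix, realSign_mul, Real.sign_of_pos hpos, mul_one, realSign_mul, overSign]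

lemma unitv_seg_sub_seg_zero (h : IsModelTriple a v) (x : E4) :
    unitv (seg (a 1) (v 1) (x 2) - seg (a 0) (v 0) (x 0)) =
      gnomonic ((modelMatrix a v).toEuclideanLin x 0) ((modelMatrix a v).toEuclideanLin x 1) := by
  obtain ⟨hv, -, hpr, -, -, h01, -⟩ := h
  simp only [pr12, Prod.mk.injEq] at hpr
  have hheight : (seg (a 1) (v 1) (x 2) - seg (a 0) (v 0) (x 0)) 2 = a 1 2 - a 0 2 := by
    simp [seg, hv]
  rw [unitv_eq_gnomonic (hheight ▸ sub_pos.mpr h01), hheight]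
  congr 1 <;>
    simp only [seg, modelMatrix, PiLp.sub_apply, PiLp.add_apply, PiLp.smul_apply, smul_eq_mul, hpr,
      Matrix.ofLp_toLpLin, Matrix.toLin'_apply, Matrix.cons_mulVec, dotProduct, Fin.sum_univ_four,
      Matrix.cons_val] <;>
    ring

lemma unitv_seg_sub_seg_two (h : IsModelTriple a v) (x : E4) :
    unitv (seg (a 1) (v 1) (x 1) - seg (a 2) (v 2) (x 3)) =
      gnomonic ((modelMatrix a v).toEuclideanLin x 2) ((modelMatrix a v).toEuclideanLin x 3) := by
  obtain ⟨hv, -, -, hpr, -, -, h21⟩ := h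
  simp only [pr12, Prod.mk.injEq] at hpr
  have hheight : (seg (a 1) (v 1) (x 1) - seg (a 2) (v 2) (x 3)) 2 = a 1 2 - a 2 2 := by
    simp [seg, hv]
  rw [unitv_eq_gnomonic (hheight ▸ sub_pos.mpr h21), hheight]
  congr 1 <;>
    simp only [seg, modelMatrix, PiLp.sub_apply, PiLp.add_apply, PiLp.smul_apply, smul_eq_mul, hpr,
      Matrix.ofLp_toLpLin, Matrix.toLin'_apply, Matrix.cons_mulVec, dotProduct, Fin.sum_univ_four,
      Matrix.cons_val] <;>
    ring

lemma IX2model_eq_setIntegral (h : IsModelTriple a v) (δ : ℝ) (g : E3 → ℝ) :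
    IX2model a v δ g = ∫ x in cube4 δ ∩ {x : E4 | x 1 < x 2},
      (modelMatrix a v).det * gnomonicDensity₂ g ((modelMatrix a v).toEuclideanLin x) := by
  simp only [IX2model, h.unitv_seg_sub_seg_zero, h.unitv_seg_sub_seg_two, wedge22_gnomonic]

end IsModelTriple

lemma norm_lt_of_mem_cube4 {r : ℝ} {x : E4} (hx : x ∈ cube4 r) : ‖x‖ < 2 * r := by
  have hr : 0 < r := (abs_nonneg _).trans_lt (hx 0)
  have hsq (i : Fin 4) : x i ^ 2 < r ^ 2 := sq_lt_sq' (abs_lt.mp (hx i)).1 (abs_lt.mp (hx i)).2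
  refine lt_of_pow_lt_pow_left₀ 2 (by positivity) ?_
  rw [EuclideanSpace.real_norm_sq_eq, Fin.sum_univ_four]
  linarith [hsq 0, hsq 1, hsq 2, hsq 3]

lemma eventually_preimage_cube4_subset {L : E4 →ₗ[ℝ] E4} (hL : LinearMap.det L ≠ 0) {δ : ℝ}
    (hδ : 0 < δ) : ∀ᶠ r in 𝓝 (0 : ℝ), L ⁻¹' cube4 r ⊆ cube4 δ := by
  obtain ⟨K, -, hK⟩ := L.exists_antilipschitzWith
    (LinearEquiv.ker (LinearMap.equivOfDetNeZero L hL))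
  have hsmall : ∀ᶠ r : ℝ in 𝓝 0, K * (2 * r) < δ :=
    ContinuousAt.eventually_lt (by fun_prop) continuousAt_const (by simpa using hδ)
  filter_upwards [hsmall] with r hr x hx i
  calc
    |x i| ≤ ‖x‖ := PiLp.norm_apply_le x i
    _ ≤ K * ‖L x‖ := hK.le_mul_norm (map_zero L) x
    _ ≤ K * (2 * r) := by gcongr; exact (norm_lt_of_mem_cube4 hx).le
    _ < δ := hr

lemma setIntegral_comp_eq_half_integral {F : E4 → ℝ} (hF : Continuous F)
    (hF_even : ∀ y, F (-y) = F y) {L : E4 →ₗ[ℝ] E4} (hL : LinearMap.det L ≠ 0) {δ : ℝ}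
    (hsupp : Function.support (F ∘ L) ⊆ cube4 δ) :
    ∫ x in cube4 δ ∩ {x : E4 | x 1 < x 2}, F (L x) =
      2⁻¹ * (|LinearMap.det L|⁻¹ * ∫ y, F y) := by
  have hint : Integrable (F ∘ L) := by
    refine (hF.comp L.continuous_of_finiteDimensional).integrable_of_hasCompactSupport
      (.of_support_subset_isCompact (isCompact_closedBall 0 (2 * δ)) fun x hx ↦ ?_)
    simpa using (norm_lt_of_mem_cube4 (hsupp hx)).le
  let f : E4 →ₗ[ℝ] ℝ := (EuclideanSpace.proj 2 - EuclideanSpace.proj 1 : E4 →L[ℝ] ℝ)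
  have hf : f ≠ 0 := fun h ↦ by simpa [f] using LinearMap.congr_fun h (EuclideanSpace.single 2 1)
  have hf_meas : Measurable f := f.continuous_of_finiteDimensional.measurable
  have hhalf : {x : E4 | x 1 < x 2} = {x | 0 < f x} := by ext; simp [f]
  have hmeas : MeasurableSet {x | 0 < f x} := measurableSet_lt measurable_const hf_meas
  calc
    ∫ x in cube4 δ ∩ {x : E4 | x 1 < x 2}, F (L x) = ∫ x in {x | 0 < f x}, (F ∘ L) x := by
      rw [hhalf]
      refine (setIntegral_eq_of_subset_of_forall_sdiff_eq_zero hmeas inter_subset_right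
        fun x hx ↦ ?_).symm
      exact Function.notMem_support.mp fun hxF ↦ hx.2 ⟨hsupp hxF, hx.1⟩
    _ = 2⁻¹ * ∫ x, F (L x) :=
      setIntegral_pos_eq_half_integral hf_meas (map_neg f) (ae_linearMap_ne_zero volume hf) hint
        fun x ↦ by simp [hF_even]
    _ = _ := by rw [integral_comp_linearMap volume hL, smul_eq_mul]

theorem IsModelTriple.eventually_IX2model_eq {a v : Fin 3 → E3} (h : IsModelTriple a v) {δ : ℝ}
    (hδ : 0 < δ) : ∀ᶠ ε in 𝓝 (0 : ℝ), ∀ g, IsEtaForm ε g →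
      IX2model a v δ g = overSign v * (2⁻¹ * ∫ y, gnomonicDensity₂ g y) := by
  set M := modelMatrix a v
  have hdet : LinearMap.det M.toEuclideanLin = M.det := LinearMap.det_toLpLin 2 M
  have hdet_ne : LinearMap.det M.toEuclideanLin ≠ 0 := hdet ▸ h.det_modelMatrix_ne_zero
  have htwo : Tendsto (fun ε : ℝ ↦ 2 * ε) (𝓝 0) (𝓝 0) :=
    Continuous.tendsto' (by fun_prop) _ _ (mul_zero 2)
  filter_upwards [htwo.eventually (eventually_preimage_cube4_subset hdet_ne hδ),
    eventually_le_nhds (show (0 : ℝ) < 1 / 2 by norm_num)] with ε hcube hε g hg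
  have hsupp : Function.support (gnomonicDensity₂ g ∘ M.toEuclideanLin) ⊆ cube4 δ :=
    (preimage_mono (hg.support_gnomonicDensity₂_subset hε)).trans hcube
  rw [h.IX2model_eq_setIntegral, integral_const_mul, setIntegral_comp_eq_half_integral
    (continuous_gnomonicDensity₂ hg.1.continuous) hg.gnomonicDensity₂_neg hdet_ne hsupp,
    hdet, ← h.sign_det_modelMatrix, ← mul_inv_abs_eq_realSign]
  ring

end ModelTriple

theorem statement14_general {a v a' v' a'' v'' : Fin 3 → E3} {δ δ' δ'' : ℝ} (hδ : 0 < δ)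
    (hδ' : 0 < δ') (hδ'' : 0 < δ'') (h : IsModelTriple a v) (h' : IsModelTriple a' v')
    (h'' : IsModelTriple a'' v'') (hs' : overSign v = overSign v')
    (hs'' : overSign v = overSign v'') :
    ∃ ε₀ > (0 : ℝ), ∀ ε : ℝ, 0 < ε → ε < ε₀ → ∀ g : E3 → ℝ, IsEtaForm ε g →
      IX2model a v δ g = IX2model a' v' δ' g ∧ IX2model a v δ g = IX2model a'' v'' δ'' g := by
  have hsmall := ((h.eventually_IX2model_eq hδ).and ((h'.eventually_IX2model_eq hδ').and
    (h''.eventually_IX2model_eq hδ''))).filter_mono (nhdsWithin_le_nhds (s := Ioi 0))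
  obtain ⟨ε₀, hε₀, H⟩ := (nhdsGT_basis 0).eventually_iff.mp hsmall
  refine ⟨ε₀, hε₀, fun ε hε hεε₀ g hg ↦ ?_⟩
  obtain ⟨hI, hI', hI''⟩ := H ⟨hε, hεε₀⟩
  rw [hI g hg, hI' g hg, hI'' g hg, ← hs', ← hs'']
  exact ⟨rfl, rfl⟩

/-- symmetries of the model integrals `I_X^{(X′₂,*)}`, `* = l, r`.
For all signs `s₁, s₂, s₃ ∈ {+1, -1}` and both `* = l` (models of type `←`) and `* = r`
(models of type `→`), the model triple-point integrals satisfy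
`I_X^{(X′₂,*),s₁,s₂,s₃} = I_X^{(X′₂,*),s₁,-s₂,-s₃} = I_X^{(X′₂,*),-s₁,-s₂,-s₃}`. -/
theorem statement14 (s1 s2 s3 : ℝ) (h1 : s1 = 1 ∨ s1 = -1) (h2 : s2 = 1 ∨ s2 = -1)
    (h3 : s3 = 1 ∨ s3 = -1) :
    (∀ (a v a' v' a'' v'' : Fin 3 → E3) (δ δ' δ'' : ℝ), 0 < δ → 0 < δ' → 0 < δ'' →
      ModelLeft a v s1 s2 s3 → ModelLeft a' v' s1 (-s2) (-s3) →
      ModelLeft a'' v'' (-s1) (-s2) (-s3) →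
      ∃ ε₀ > (0 : ℝ), ∀ ε : ℝ, 0 < ε → ε < ε₀ → ∀ g : E3 → ℝ, IsEtaForm ε g →
        IX2model a v δ g = IX2model a' v' δ' g ∧
        IX2model a v δ g = IX2model a'' v'' δ'' g) ∧
    (∀ (a v a' v' a'' v'' : Fin 3 → E3) (δ δ' δ'' : ℝ), 0 < δ → 0 < δ' → 0 < δ'' →
      ModelRight a v s1 s2 s3 → ModelRight a' v' s1 (-s2) (-s3) →
      ModelRight a'' v'' (-s1) (-s2) (-s3) →
      ∃ ε₀ > (0 : ℝ), ∀ ε : ℝ, 0 < ε → ε < ε₀ → ∀ g : E3 → ℝ, IsEtaForm ε g →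
        IX2model a v δ g = IX2model a' v' δ' g ∧
        IX2model a v δ g = IX2model a'' v'' δ'' g) := by
  constructor <;>
    intro a v a' v' a'' v'' δ δ' δ'' hδ hδ' hδ'' h h' h'' <;>
    exact statement14_general hδ hδ' hδ'' h.1 h'.1 h''.1
      (by rw [h.overSign_eq, h'.overSign_eq, neg_mul_neg])
      (by rw [h.overSign_eq, h''.overSign_eq, neg_mul_neg])

end
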